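/- (Sensitivity to robotic uncertainty) Fix vehicle length l > 0, positive constants T, L, τ, speed v > 0 and headway η > 0 with v·η > l. Then the collision probability σₒ ↦ p(v,η;σₒ) = Φ((l − v·η)/(v·σₒ·√η)) is strictly increasing in the uncertainty parameter σₒ on (0,∞), and consequently the collision-inclusive capacity s(v,η) = 1/(η + (T·L)/(τ·v)·p(v,η;σₒ)) is strictly decreasing in σₒ. -/

import Mathlib

open MeasureTheory Real Filter Set

/-- The standard Gaussian probability density function. -/
noncomputable def stdGaussianPDF (x : ℝ) : ℝ :=
  (Real.sqrt (2 * Real.pi))⁻¹ * Real.exp (-x ^ 2 / 2)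

/-- The standard Gaussian cumulative distribution function Φ. -/
noncomputable def stdGaussianCDF (x : ℝ) : ℝ :=
  ∫ t in Set.Iic x, stdGaussianPDF t

/-- The per-time-step collision probability p(v,η) = Φ((l − v·η)/(v·σₒ·√η)). -/
noncomputable def collisionProb (l σₒ v η : ℝ) : ℝ :=
  stdGaussianCDF ((l - v * η) / (v * σₒ * Real.sqrt η))

/-- The collision-inclusive capacity s(v,η) = 1/(η + (T·L)/(τ·v)·p(v,η)). -/
noncomputable def cic (l σₒ T L τ v η : ℝ) : ℝ :=
  1 / (η + (T * L) / (τ * v) * collisionProb l σₒ v η)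


theorem stdGaussianPDF_pos' (x : ℝ) : 0 < stdGaussianPDF x := by
  unfold stdGaussianPDF
  positivity

theorem stdGaussianPDF_integrable' : Integrable stdGaussianPDF := by
  have h := (integrable_exp_neg_mul_sq (b := 1 / 2) (by norm_num)).const_mul
    ((Real.sqrt (2 * Real.pi))⁻¹)
  refine h.congr (Filter.Eventually.of_forall fun x => ?_)
  simp only [stdGaussianPDF]
  congr 2
  ring

theorem stdGaussianPDF_continuous' : Continuous stdGaussianPDF := by
  unfold stdGaussianPDF
  fun_prop

theorem stdGaussianCDF_strictMono' : StrictMono stdGaussianCDF := by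
  intro a b hab
  have h := intervalIntegral.integral_Iic_sub_Iic (μ := volume)
    (stdGaussianPDF_integrable'.integrableOn (s := Set.Iic a))
    (stdGaussianPDF_integrable'.integrableOn (s := Set.Iic b))
  have h2 : 0 < ∫ x in a..b, stdGaussianPDF x :=
    intervalIntegral.intervalIntegral_pos_of_pos
      (stdGaussianPDF_continuous'.intervalIntegrable a b) stdGaussianPDF_pos' hab
  unfold stdGaussianCDF
  linarith

theorem stdGaussianCDF_nonneg' (x : ℝ) : 0 ≤ stdGaussianCDF x :=
  integral_nonneg fun t => (stdGaussianPDF_pos' t).le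

/-- sensitivity to robotic uncertainty: when v·η > l, the
collision probability is strictly increasing in σₒ on (0,∞), and consequently
the collision-inclusive capacity is strictly decreasing in σₒ on (0,∞). -/
theorem sensitivity_robotic_uncertainty (l T L τ v η : ℝ)
    (hl : 0 < l) (hT : 0 < T) (hL : 0 < L) (hτ : 0 < τ)
    (hv : 0 < v) (hη : 0 < η) (hvηl : l < v * η) :
    StrictMonoOn (fun σₒ => collisionProb l σₒ v η) (Set.Ioi 0) ∧
    StrictAntiOn (fun σₒ => cic l σₒ T L τ v η) (Set.Ioi 0) := by
  have hmono : StrictMonoOn (fun σₒ => collisionProb l σₒ v η) (Set.Ioi 0) := by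
    intro a ha b hb hab
    have ha' : 0 < a := ha
    have hs : 0 < Real.sqrt η := Real.sqrt_pos.mpr hη
    apply stdGaussianCDF_strictMono'
    have h1 : 0 < v * a * Real.sqrt η := by positivity
    have h2 : v * a * Real.sqrt η < v * b * Real.sqrt η := by gcongr
    have h3 := div_lt_div_of_pos_left (sub_pos.mpr hvηl) h1 h2
    have e : l - v * η = -(v * η - l) := by ring
    rw [e, neg_div, neg_div]
    exact neg_lt_neg h3
  refine ⟨hmono, ?_⟩
  intro a ha b hb hab
  have h := hmono ha hb hab
  have hp : 0 ≤ collisionProb l a v η := stdGaussianCDF_nonneg' _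
  have hc : 0 < (T * L) / (τ * v) := by positivity
  simp only [cic]
  apply one_div_lt_one_div_of_lt
  · positivity
  · have := mul_lt_mul_of_pos_left h hc
    simp only at this
    linarith
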